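/- Let X_1 and ε_2 be independent random variables, each uniformly distributed on [−1,1], let 0 < β ≤ 1 be a real constant, and let X_2 = βX_1 + ε_2. Then E[(X_1 − E[X_1 | X_2])²] = (2 − β)/6. -/

import Mathlib

open MeasureTheory ProbabilityTheory
open scoped ENNReal

namespace ULM

def S (β : ℝ) : Set (ℝ × ℝ) := {p | p.1 ∈ Set.Icc (-1 : ℝ) 1 ∧ p.2 - β * p.1 ∈ Set.Icc (-1 : ℝ) 1}

noncomputable def lo (β s : ℝ) : ℝ := max (-1) ((s - 1) / β)
noncomputable def hi (β s : ℝ) : ℝ := min 1 ((s + 1) / β)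
noncomputable def g (β s : ℝ) : ℝ := (lo β s + hi β s) / 2

lemma mem_S {β : ℝ} (hβ : 0 < β) (x s : ℝ) : (x, s) ∈ S β ↔ x ∈ Set.Icc (lo β s) (hi β s) := by
  simp only [S, lo, hi, Set.mem_ofPred_eq, Set.mem_Icc, max_le_iff, le_min_iff, div_le_iff₀ hβ,
    le_div_iff₀ hβ]
  constructor
  · rintro ⟨⟨_, _⟩, _, _⟩
    refine ⟨⟨?_, ?_⟩, ?_, ?_⟩ <;> linarith
  · rintro ⟨⟨_, _⟩, _, _⟩
    refine ⟨⟨?_, ?_⟩, ?_, ?_⟩ <;> linarith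

lemma continuous_g (β : ℝ) : Continuous (g β) := by
  unfold g lo hi; fun_prop

lemma closed_S (β : ℝ) : IsClosed (S β) := by
  have h1 : IsClosed ((fun p : ℝ × ℝ => p.1) ⁻¹' Set.Icc (-1 : ℝ) 1) :=
    isClosed_Icc.preimage (by fun_prop)
  have h2 : IsClosed ((fun p : ℝ × ℝ => p.2 - β * p.1) ⁻¹' Set.Icc (-1 : ℝ) 1) :=
    isClosed_Icc.preimage (by fun_prop)
  exact h1.inter h2

lemma compact_S {β : ℝ} (hβ : 0 < β) : IsCompact (S β) := by
  refine IsCompact.of_isClosed_subset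
    ((isCompact_Icc (a := (-1 : ℝ)) (b := 1)).prod (isCompact_Icc (a := -(1 + β)) (b := 1 + β)))
    (closed_S β) ?_
  rintro ⟨x, s⟩ ⟨⟨h1, h2⟩, h3, h4⟩
  simp only at h1 h2 h3 h4
  refine ⟨⟨h1, h2⟩, ?_, ?_⟩ <;> simp only <;> nlinarith

lemma shear (β : ℝ) : MeasurePreserving (fun p : ℝ × ℝ => (p.1, β * p.1 + p.2))
    (volume : Measure (ℝ × ℝ)) volume := by
  refine MeasurePreserving.skew_product (f := id) (g := fun x e => β * x + e)
    (MeasurePreserving.id _) (by fun_prop) ?_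
  filter_upwards with x
  exact map_add_left_eq_self volume (β * x)

lemma law {Ω : Type*} [MeasurableSpace Ω] (μ : Measure Ω) [IsProbabilityMeasure μ]
    (X₁ ε₂ : Ω → ℝ) (hX₁ : Measurable X₁) (hε₂ : Measurable ε₂)
    (hindep : IndepFun X₁ ε₂ μ)
    (hu1 : Measure.map X₁ μ = (2 : ℝ≥0∞)⁻¹ • volume.restrict (Set.Icc (-1 : ℝ) 1))
    (hu2 : Measure.map ε₂ μ = (2 : ℝ≥0∞)⁻¹ • volume.restrict (Set.Icc (-1 : ℝ) 1))
    (β : ℝ) :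
    Measure.map (fun ω => (X₁ ω, β * X₁ ω + ε₂ ω)) μ
      = (4 : ℝ≥0∞)⁻¹ • (volume : Measure (ℝ × ℝ)).restrict (S β) := by
  have h1 := (indepFun_iff_map_prod_eq_prod_map_map hX₁.aemeasurable hε₂.aemeasurable).1 hindep
  have h2 : (fun ω => (X₁ ω, β * X₁ ω + ε₂ ω)) =
    (fun p : ℝ × ℝ => (p.1, β * p.1 + p.2)) ∘ (fun ω => (X₁ ω, ε₂ ω)) := rfl
  rw [h2, ← Measure.map_map (by fun_prop) (by fun_prop), h1, hu1, hu2, Measure.prod_smul_left,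
    Measure.prod_smul_right, Measure.prod_restrict, smul_smul, Measure.map_smul]
  have h3 := ((shear β).restrict_preimage (closed_S β).measurableSet).map_eq
  have h4 : (fun p : ℝ × ℝ => (p.1, β * p.1 + p.2)) ⁻¹' S β
      = Set.Icc (-1 : ℝ) 1 ×ˢ Set.Icc (-1 : ℝ) 1 := by
    ext ⟨x, e⟩
    simp [S]
    constructor
    · rintro ⟨⟨_, _⟩, _, _⟩
      refine ⟨⟨?_, ?_⟩, ?_, ?_⟩ <;> linarith
    · rintro ⟨⟨_, _⟩, _, _⟩
      refine ⟨⟨?_, ?_⟩, ?_, ?_⟩ <;> linarith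
  rw [h4] at h3
  rw [← Measure.volume_eq_prod, h3]
  congr 1
  rw [← ENNReal.mul_inv (by simp) (by simp)]
  norm_num

lemma int_S {β : ℝ} (hβ : 0 < β) (F : ℝ × ℝ → ℝ)
    (hF : IntegrableOn F (S β)) :
    ∫ p in S β, F p = ∫ s, ∫ x in Set.Icc (lo β s) (hi β s), F (x, s) := by
  have hm := (closed_S β).measurableSet
  rw [← integral_indicator hm, Measure.volume_eq_prod, integral_prod_symm]
  · congr 1; ext s
    rw [← integral_indicator measurableSet_Icc]
    congr 1; ext x
    simp only [Set.indicator, mem_S hβ]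
  · exact (integrable_indicator_iff hm).2 hF

lemma int_lin (a b : ℝ) : ∫ x in Set.Icc a b, (x - (a + b) / 2) = 0 := by
  by_cases h : a ≤ b
  · rw [integral_Icc_eq_integral_Ioc, ← intervalIntegral.integral_of_le h]
    rw [intervalIntegral.integral_sub (by simp) (by simp)]
    simp
    ring
  · rw [Set.Icc_eq_empty h]; simp

lemma int_sq (a b : ℝ) : ∫ x in Set.Icc a b, (x - (a + b) / 2) ^ 2 = (max (b - a) 0) ^ 3 / 12 := by
  by_cases h : a ≤ b
  · rw [integral_Icc_eq_integral_Ioc, ← intervalIntegral.integral_of_le h]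
    rw [intervalIntegral.integral_comp_sub_right (fun x => x ^ 2), integral_pow,
      max_eq_left (by linarith)]
    push_cast
    ring
  · rw [Set.Icc_eq_empty h, max_eq_right (by linarith)]; simp

lemma int_cube {β : ℝ} (hβ : 0 < β) (c k : ℝ) (hk : k ≠ 0) (u v : ℝ) :
    ∫ s in u..v, ((c + k * s) / β) ^ 3 / 12 =
      β / (48 * k) * ((c + k * v) / β) ^ 4 - β / (48 * k) * ((c + k * u) / β) ^ 4 := by
  refine intervalIntegral.integral_eq_sub_of_hasDerivAt
    (f := fun s => β / (48 * k) * ((c + k * s) / β) ^ 4) ?_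
    (Continuous.intervalIntegrable (by fun_prop) _ _)
  intro x _
  have h := ((((((hasDerivAt_id x).const_mul k).const_add c).div_const β).pow 4).const_mul
    (β / (48 * k)))
  have e : β / (48 * k) * (((4 : ℕ) : ℝ) * ((c + k * id x) / β) ^ (4 - 1) * (k * 1 / β))
      = ((c + k * x) / β) ^ 3 / 12 := by
    simp only [id]
    push_cast
    field_simp
    norm_num
    ring
  exact e ▸ h

lemma final {β : ℝ} (hβ : 0 < β) (hβ1 : β ≤ 1) :
    ∫ s, (max (hi β s - lo β s) 0) ^ 3 / 12 = 4 * ((2 - β) / 6) := by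
  have hc : Continuous fun s => (max (hi β s - lo β s) 0) ^ 3 / 12 := by
    unfold hi lo; fun_prop
  have key : ∀ s, s ∉ Set.Icc (-(1 + β)) (1 + β) → (max (hi β s - lo β s) 0) ^ 3 / 12 = 0 := by
    intro s hs
    rw [max_eq_right]
    · simp
    · by_contra! h
      have h' : lo β s ≤ hi β s := by linarith
      have := (mem_S hβ (lo β s) s).2 ⟨le_rfl, h'⟩
      obtain ⟨⟨h1, h2⟩, h3, h4⟩ := this
      simp only at h1 h2 h3 h4
      exact hs ⟨by nlinarith, by nlinarith⟩
  rw [← setIntegral_eq_integral_of_forall_compl_eq_zero key, integral_Icc_eq_integral_Ioc,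
    ← intervalIntegral.integral_of_le (by linarith),
    ← intervalIntegral.integral_add_adjacent_intervals (b := -(1 - β))
      (hc.intervalIntegrable _ _) (hc.intervalIntegrable _ _),
    ← intervalIntegral.integral_add_adjacent_intervals (a := -(1 - β)) (b := 1 - β)
      (hc.intervalIntegrable _ _) (hc.intervalIntegrable _ _)]
  have e1 : ∫ s in (-(1 + β))..(-(1 - β)), (max (hi β s - lo β s) 0) ^ 3 / 12 =
      ∫ s in (-(1 + β))..(-(1 - β)), (((1 + β) + 1 * s) / β) ^ 3 / 12 := by
    refine intervalIntegral.integral_congr fun s hs => ?_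
    rw [Set.uIcc_of_le (by linarith)] at hs
    obtain ⟨h1, h2⟩ := hs
    have a1 : hi β s = (s + 1) / β := min_eq_right ((div_le_iff₀ hβ).2 (by linarith))
    have a2 : lo β s = -1 := max_eq_left ((div_le_iff₀ hβ).2 (by linarith))
    have a3 : (s + 1) / β - -1 = ((1 + β) + 1 * s) / β := by field_simp; ring
    simp only [a1, a2, a3]
    rw [max_eq_left (div_nonneg (by linarith) hβ.le)]
  have e2 : ∫ s in (-(1 - β))..(1 - β), (max (hi β s - lo β s) 0) ^ 3 / 12 =
      ∫ s in (-(1 - β))..(1 - β), (2 / 3 : ℝ) := by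
    refine intervalIntegral.integral_congr fun s hs => ?_
    rw [Set.uIcc_of_le (by linarith)] at hs
    obtain ⟨h1, h2⟩ := hs
    have a1 : hi β s = 1 := min_eq_left ((le_div_iff₀ hβ).2 (by linarith))
    have a2 : lo β s = -1 := max_eq_left ((div_le_iff₀ hβ).2 (by linarith))
    simp only [a1, a2]
    norm_num
  have e3 : ∫ s in (1 - β)..(1 + β), (max (hi β s - lo β s) 0) ^ 3 / 12 =
      ∫ s in (1 - β)..(1 + β), (((1 + β) + (-1) * s) / β) ^ 3 / 12 := by
    refine intervalIntegral.integral_congr fun s hs => ?_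
    rw [Set.uIcc_of_le (by linarith)] at hs
    obtain ⟨h1, h2⟩ := hs
    have a1 : hi β s = 1 := min_eq_left ((le_div_iff₀ hβ).2 (by linarith))
    have a2 : lo β s = (s - 1) / β := max_eq_right ((le_div_iff₀ hβ).2 (by linarith))
    have a3 : 1 - (s - 1) / β = ((1 + β) + (-1) * s) / β := by field_simp; ring
    simp only [a1, a2, a3]
    rw [max_eq_left (div_nonneg (by linarith) hβ.le)]
  rw [e1, e2, e3, int_cube hβ _ _ (by norm_num), int_cube hβ _ _ (by norm_num),
    intervalIntegral.integral_const, smul_eq_mul]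
  have b1 : ((1 + β) + 1 * -(1 - β)) / β = 2 := by field_simp; ring
  have b2 : ((1 + β) + 1 * -(1 + β)) / β = 0 := by field_simp; ring
  have b3 : ((1 + β) + (-1) * (1 - β)) / β = 2 := by field_simp; ring
  have b4 : ((1 + β) + (-1) * (1 + β)) / β = 0 := by field_simp; ring
  rw [b1, b2, b3, b4]
  ring

end ULM

open ULM in
/-- For the linear model `X₂ = β X₁ + ε₂` with `X₁, ε₂` i.i.d. uniform on `[-1,1]`
and `0 < β ≤ 1`, the expected conditional variance `E[(X₁ − E[X₁ | X₂])²]` equals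
`(2 − β)/6`. -/
theorem uniform_linear_model_residual_variance_of_le_one
    {Ω : Type*} [MeasurableSpace Ω] (μ : Measure Ω) [IsProbabilityMeasure μ]
    (X₁ ε₂ : Ω → ℝ) (hX₁ : Measurable X₁) (hε₂ : Measurable ε₂)
    (hindep : IndepFun X₁ ε₂ μ)
    (hu1 : Measure.map X₁ μ = (2 : ℝ≥0∞)⁻¹ • volume.restrict (Set.Icc (-1 : ℝ) 1))
    (hu2 : Measure.map ε₂ μ = (2 : ℝ≥0∞)⁻¹ • volume.restrict (Set.Icc (-1 : ℝ) 1))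
    (β : ℝ) (hβ0 : 0 < β) (hβ1 : β ≤ 1)
    (X₂ : Ω → ℝ) (hX₂ : X₂ = fun ω => β * X₁ ω + ε₂ ω) :
    ∫ ω, (X₁ ω - (μ[X₁ | MeasurableSpace.comap X₂ Real.measurableSpace]) ω) ^ 2 ∂μ =
      (2 - β) / 6 := by
  have hlaw := law μ X₁ ε₂ hX₁ hε₂ hindep hu1 hu2 β
  have hX₂m : Measurable X₂ := by rw [hX₂]; fun_prop
  have hlaw' : Measure.map (fun ω => (X₁ ω, X₂ ω)) μ
      = (4 : ℝ≥0∞)⁻¹ • (volume : Measure (ℝ × ℝ)).restrict (S β) := by rw [hX₂]; exact hlaw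
  have hpm : Measurable (fun ω => (X₁ ω, X₂ ω)) := hX₁.prodMk hX₂m
  have hgc := continuous_g β
  -- transfer
  have hint : ∀ F : ℝ × ℝ → ℝ, Measurable F →
      ∫ ω, F (X₁ ω, X₂ ω) ∂μ = 4⁻¹ * ∫ p in S β, F p := by
    intro F hF
    rw [← integral_map (φ := fun ω => (X₁ ω, X₂ ω)) hpm.aemeasurable hF.aestronglyMeasurable,
      hlaw', integral_smul_measure]
    simp
  have hintble : ∀ F : ℝ × ℝ → ℝ, Continuous F → Integrable (fun ω => F (X₁ ω, X₂ ω)) μ := by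
    intro F hF
    have : Integrable F (Measure.map (fun ω => (X₁ ω, X₂ ω)) μ) := by
      rw [hlaw']
      exact Integrable.smul_measure (hF.continuousOn.integrableOn_compact (compact_S hβ0)) (by simp)
    exact this.comp_measurable hpm
  have iX : Integrable X₁ μ := hintble (fun p => p.1) (by fun_prop)
  have ig : Integrable (fun ω => g β (X₂ ω)) μ := hintble (fun p => g β p.2) (by fun_prop)
  have hce : (fun ω => g β (X₂ ω)) =ᵐ[μ] μ[X₁ | MeasurableSpace.comap X₂ Real.measurableSpace] := by
    refine ae_eq_condExp_of_forall_setIntegral_eq hX₂m.comap_le iX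
      (fun s _ _ => ig.integrableOn) ?_ ?_
    · rintro _ ⟨B, hB, rfl⟩ _
      symm
      rw [← sub_eq_zero, ← integral_sub iX.integrableOn ig.integrableOn,
        ← integral_indicator (hX₂m hB)]
      have h := hint ((Prod.snd ⁻¹' B).indicator (fun p => p.1 - g β p.2))
        (Measurable.indicator (by fun_prop) (measurable_snd hB))
      have h0 : ∫ p in S β, (Prod.snd ⁻¹' B).indicator (fun p : ℝ × ℝ => p.1 - g β p.2) p = 0 := by
        rw [int_S hβ0]
        · refine integral_eq_zero_of_ae (Filter.Eventually.of_forall fun s => ?_)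
          by_cases hs : s ∈ B
          · simp only [Set.indicator, Set.mem_preimage, hs, if_true]
            exact int_lin _ _
          · simp [Set.indicator, hs]
        · refine Integrable.indicator ?_ (measurable_snd hB)
          exact (Continuous.continuousOn (by fun_prop)).integrableOn_compact (compact_S hβ0)
      rw [h0, mul_zero] at h
      exact h
    · exact ((hgc.measurable.comp (comap_measurable X₂)).stronglyMeasurable).aestronglyMeasurable
  have h1 : ∫ ω, (X₁ ω - (μ[X₁ | MeasurableSpace.comap X₂ Real.measurableSpace]) ω) ^ 2 ∂μ =
      ∫ ω, (X₁ ω - g β (X₂ ω)) ^ 2 ∂μ := by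
    refine integral_congr_ae ?_
    filter_upwards [hce] with ω h
    rw [← h]
  rw [h1, hint (fun p => (p.1 - g β p.2) ^ 2) (by fun_prop), int_S hβ0]
  · have : ∀ s, ∫ x in Set.Icc (lo β s) (hi β s), (x - g β s) ^ 2
        = (max (hi β s - lo β s) 0) ^ 3 / 12 := fun s => int_sq _ _
    simp only [this]
    rw [final hβ0 hβ1]
    ring
  · exact (Continuous.continuousOn (by fun_prop)).integrableOn_compact (compact_S hβ0)
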